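/- arXiv:1102.4371 — 2 statements merged into one kernel-verified Lean document; each statement's English description precedes it below -/
import Mathlib

section
/- In the precision-test setup, for every x > 0 the local power differences satisfy: Π₁(x) − Π₂(x) = −(α₃ε/α₂) g_{5,λ}(x) + (α₃ε³/3) g_{7,λ}(x); Π₁(x) − Π₃(x) = ((2α₃ − 3α₂′)ε/α₂) g_{5,λ}(x) − ((2α₃ − 3α₂′)ε³/3) g_{7,λ}(x); Π₁(x) − Π₄(x) = (α₃ε/(2α₂)) g_{5,λ}(x) − (α₃ε³/6) g_{7,λ}(x); Π₂(x) − Π₃(x) = (3(α₃ − α₂′)ε/α₂) g_{5,λ}(x) − (α₃ − α₂′)ε³ g_{7,λ}(x); Π₂(x) − Π₄(x) = (3α₃ε/(2α₂)) g_{5,λ}(x) − (α₃ε³/2) g_{7,λ}(x); Π₃(x) − Π₄(x) = −(3(α₃ − 2α₂′)ε/(2α₂)) g_{5,λ}(x) + ((α₃ − 2α₂′)ε³/2) g_{7,λ}(x). -/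
/-!
The central densities satisfy `f_{m+2}(x) = (x / m) f_m(x)`, hence `f_{m+2}' = (f_m - f_{m+2}) / 2`
away from `0`. As `f_{m+2}` is continuous and vanishes at `0`, integrating gives
`∫₀ˣ f_m - ∫₀ˣ f_{m+2} = 2 f_{m+2}(x)`. All the `f_m` have total mass `1` and the Poisson weights
are absolutely summable, so the mixture may be integrated term by term and
`G_{m,λ} - G_{m+2,λ} = 2 g_{m+2,λ}`.

Summation by parts then turns a local power into
`1 - G_{1,λ} + 2 ((b₁ + b₂ + b₃) g_{3,λ} + (b₂ + b₃) g_{5,λ} + b₃ g_{7,λ})`. All four tests have the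
same `b₁ + b₂ + b₃`, so only `g_{5,λ}` and `g_{7,λ}` survive in the differences.
-/

/-- The chi-square density with `m` degrees of freedom:
`f_m(x) = x^(m/2-1) e^(-x/2) / (2^(m/2) Γ(m/2))` for `x > 0`, and `0` otherwise. -/
noncomputable def chisqPDF (m : ℕ) (x : ℝ) : ℝ :=
  if 0 < x then
    x ^ ((m : ℝ) / 2 - 1) * Real.exp (-x / 2) /
      (2 ^ ((m : ℝ) / 2) * Real.Gamma ((m : ℝ) / 2))
  else 0

/-- The noncentral chi-square density with `m` degrees of freedom and
noncentrality parameter `lam`: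
`g_{m,λ}(x) = Σ_{j=0}^∞ [e^{-λ/2} (λ/2)^j / j!] f_{m+2j}(x)`. -/
noncomputable def ncChisqPDF (m : ℕ) (lam x : ℝ) : ℝ :=
  ∑' j : ℕ, Real.exp (-lam / 2) * (lam / 2) ^ j / (Nat.factorial j : ℝ) *
    chisqPDF (m + 2 * j) x

/-- The noncentral chi-square distribution function
`G_{m,λ}(x) = ∫_0^x g_{m,λ}(u) du`. -/
noncomputable def ncChisqCDF (m : ℕ) (lam x : ℝ) : ℝ :=
  ∫ u in (0 : ℝ)..x, ncChisqPDF m lam u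

/-- The order-`n^{-1/2}` local power `1 - G_{1,λ}(x) - Σ_{k=0}^3 b_k G_{1+2k,λ}(x)`
of a test whose expansion coefficients are `b₀ = -(b₁+b₂+b₃), b₁, b₂, b₃`. -/
noncomputable def localPower (b1 b2 b3 lam x : ℝ) : ℝ :=
  1 - ncChisqCDF 1 lam x -
    (-(b1 + b2 + b3) * ncChisqCDF 1 lam x + b1 * ncChisqCDF 3 lam x +
      b2 * ncChisqCDF 5 lam x + b3 * ncChisqCDF 7 lam x)

/-- Local power `Π₁` of the likelihood ratio test of `H₀ : φ = φ₀` in a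
dispersion model, with `λ = -α₂ ε²`. -/
noncomputable def PiLR (α₂ α₂' α₃ ε φ : ℝ) (p : ℕ) (x : ℝ) : ℝ :=
  localPower ((α₂' - α₃) * ε ^ 3 / 2 + p * ε / (2 * φ))
    ((2 * α₃ - 3 * α₂') * ε ^ 3 / 6) 0 (-α₂ * ε ^ 2) x

/-- Local power `Π₂` of the Wald test of `H₀ : φ = φ₀` in a dispersion model. -/
noncomputable def PiWald (α₂ α₂' α₃ ε φ : ℝ) (p : ℕ) (x : ℝ) : ℝ :=
  localPower ((α₂' - α₃) * ε ^ 3 / 2 - α₃ * ε / (2 * α₂) + p * ε / (2 * φ))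
    (-((α₂' - α₃) * ε ^ 3) / 2 + α₃ * ε / (2 * α₂)) (-(α₃ * ε ^ 3) / 6)
    (-α₂ * ε ^ 2) x

/-- Local power `Π₃` of the score test of `H₀ : φ = φ₀` in a dispersion model. -/
noncomputable def PiScore (α₂ α₂' α₃ ε φ : ℝ) (p : ℕ) (x : ℝ) : ℝ :=
  localPower ((α₂' - α₃) * ε ^ 3 / 2 + (2 * α₃ - 3 * α₂') * ε / (2 * α₂) + p * ε / (2 * φ))
    (-((2 * α₃ - 3 * α₂') * ε) / (2 * α₂)) ((2 * α₃ - 3 * α₂') * ε ^ 3 / 6)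
    (-α₂ * ε ^ 2) x

/-- Local power `Π₄` of the gradient test of `H₀ : φ = φ₀` in a dispersion model. -/
noncomputable def PiGrad (α₂ α₂' α₃ ε φ : ℝ) (p : ℕ) (x : ℝ) : ℝ :=
  localPower ((α₂' - α₃) * ε ^ 3 / 2 + α₃ * ε / (4 * α₂) + p * ε / (2 * φ))
    (-((2 * α₂' - α₃) * ε ^ 3) / 4 - α₃ * ε / (4 * α₂)) (α₃ * ε ^ 3 / 12)
    (-α₂ * ε ^ 2) x

open MeasureTheory ProbabilityTheory Set

section CentralDensity

lemma chisqPDF_of_nonpos (m : ℕ) {x : ℝ} (hx : x ≤ 0) : chisqPDF m x = 0 :=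
  if_neg hx.not_gt

lemma chisqPDF_of_pos (m : ℕ) {x : ℝ} (hx : 0 < x) :
    chisqPDF m x = x ^ ((m : ℝ) / 2 - 1) * Real.exp (-x / 2) /
      (2 ^ ((m : ℝ) / 2) * Real.Gamma ((m : ℝ) / 2)) :=
  if_pos hx

lemma chisqPDF_nonneg (m : ℕ) (x : ℝ) : 0 ≤ chisqPDF m x := by
  rcases le_or_gt x 0 with hx | hx
  · exact (chisqPDF_of_nonpos m hx).ge
  · rw [chisqPDF_of_pos m hx]
    exact div_nonneg (by positivity)
      (mul_nonneg (by positivity) (Real.Gamma_nonneg_of_nonneg (by positivity)))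

lemma chisqPDF_add_two {m : ℕ} (hm : 0 < m) (x : ℝ) :
    chisqPDF (m + 2) x = x / m * chisqPDF m x := by
  rcases le_or_gt x 0 with hx | hx
  · simp only [chisqPDF_of_nonpos _ hx, mul_zero]
  have hm' : (0 : ℝ) < m := Nat.cast_pos.mpr hm
  have hΓ : Real.Gamma ((m : ℝ) / 2) ≠ 0 := (Real.Gamma_pos_of_pos (half_pos hm')).ne'
  have half_add_two : ((m + 2 : ℕ) : ℝ) / 2 = (m : ℝ) / 2 + 1 := by push_cast; ring
  have rpow_succ : x ^ ((m : ℝ) / 2) = x ^ ((m : ℝ) / 2 - 1) * x := by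
    rw [← Real.rpow_add_one hx.ne', sub_add_cancel]
  rw [chisqPDF_of_pos _ hx, chisqPDF_of_pos _ hx, half_add_two, add_sub_cancel_right, rpow_succ,
    Real.rpow_add_one two_ne_zero, Real.Gamma_add_one (half_pos hm').ne']
  field_simp

lemma hasDerivAt_chisqPDF (m : ℕ) {x : ℝ} (hx : x ≠ 0) :
    HasDerivAt (chisqPDF m) ((((m : ℝ) / 2 - 1) / x - 1 / 2) * chisqPDF m x) x := by
  rcases hx.lt_or_gt with hneg | hpos
  · rw [chisqPDF_of_nonpos m hneg.le, mul_zero]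
    refine (hasDerivAt_const x (0 : ℝ)).congr_of_eventuallyEq ?_
    filter_upwards [Iio_mem_nhds hneg] with u hu using chisqPDF_of_nonpos m (le_of_lt hu)
  · have hpow : HasDerivAt (fun u : ℝ ↦ u ^ ((m : ℝ) / 2 - 1))
        (((m : ℝ) / 2 - 1) * x ^ ((m : ℝ) / 2 - 1 - 1)) x :=
      Real.hasDerivAt_rpow_const (Or.inl hx)
    have hexp : HasDerivAt (fun u : ℝ ↦ Real.exp (-u / 2)) (Real.exp (-x / 2) * (-1 / 2)) x :=
      ((hasDerivAt_neg x).div_const 2).exp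
    have hformula := (hpow.mul hexp).div_const (2 ^ ((m : ℝ) / 2) * Real.Gamma ((m : ℝ) / 2))
    refine (hformula.congr_of_eventuallyEq ?_).congr_deriv ?_
    · filter_upwards [Ioi_mem_nhds hpos] with u hu using chisqPDF_of_pos m hu
    · rw [chisqPDF_of_pos m hpos, Real.rpow_sub_one hx]
      ring

lemma hasDerivAt_chisqPDF_add_two {m : ℕ} (hm : 0 < m) {x : ℝ} (hx : x ≠ 0) :
    HasDerivAt (chisqPDF (m + 2)) ((chisqPDF m x - chisqPDF (m + 2) x) / 2) x := by
  refine (hasDerivAt_chisqPDF (m + 2) hx).congr_deriv ?_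
  rw [chisqPDF_add_two hm]
  push_cast
  field_simp
  ring

lemma continuous_chisqPDF {m : ℕ} (hm : 2 < m) : Continuous (chisqPDF m) := by
  have hexponent : 0 < (m : ℝ) / 2 - 1 := by
    have : (2 : ℝ) < m := mod_cast hm
    linarith
  have hformula : chisqPDF m = fun x : ℝ ↦ max x 0 ^ ((m : ℝ) / 2 - 1) * Real.exp (-x / 2) /
      (2 ^ ((m : ℝ) / 2) * Real.Gamma ((m : ℝ) / 2)) := by
    ext x
    rcases le_or_gt x 0 with hx | hx
    · simp [chisqPDF_of_nonpos m hx, max_eq_right hx, Real.zero_rpow hexponent.ne']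
    · rw [chisqPDF_of_pos m hx, max_eq_left hx.le]
  rw [hformula]
  have hpow : Continuous fun x : ℝ ↦ max x 0 ^ ((m : ℝ) / 2 - 1) :=
    (continuous_id.max continuous_const).rpow_const fun _ ↦ Or.inr hexponent.le
  fun_prop

-- The two sides differ at `0` when `m = 2`: `gammaPDFReal` uses the closed formula there too.
lemma chisqPDF_ae_eq_gammaPDFReal (m : ℕ) :
    chisqPDF m =ᵐ[volume] gammaPDFReal ((m : ℝ) / 2) (1 / 2) := by
  filter_upwards [Measure.ae_ne volume 0] with x hx
  rcases hx.lt_or_gt with hneg | hpos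
  · rw [chisqPDF_of_nonpos m hneg.le, gammaPDFReal, if_neg hneg.not_ge]
  · rw [chisqPDF_of_pos m hpos, gammaPDFReal, if_pos hpos.le,
      Real.div_rpow zero_le_one zero_le_two, Real.one_rpow,
      show -x / 2 = -(1 / 2 * x) by ring]
    ring

lemma lintegral_chisqPDF {m : ℕ} (hm : 0 < m) : ∫⁻ x, ENNReal.ofReal (chisqPDF m x) = 1 := by
  have hm' : (0 : ℝ) < m := Nat.cast_pos.mpr hm
  rw [← lintegral_gammaPDF_eq_one (half_pos hm') one_half_pos]
  exact lintegral_congr_ae ((chisqPDF_ae_eq_gammaPDFReal m).fun_comp ENNReal.ofReal)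

lemma aestronglyMeasurable_chisqPDF (m : ℕ) : AEStronglyMeasurable (chisqPDF m) volume :=
  (stronglyMeasurable_gammaPDFReal _ _).aestronglyMeasurable.congr
    (chisqPDF_ae_eq_gammaPDFReal m).symm

lemma integrable_chisqPDF {m : ℕ} (hm : 0 < m) : Integrable (chisqPDF m) := by
  refine (lintegral_ofReal_ne_top_iff_integrable (aestronglyMeasurable_chisqPDF m)
    (.of_forall (chisqPDF_nonneg m))).mp ?_
  simp [lintegral_chisqPDF hm]

lemma integral_chisqPDF {m : ℕ} (hm : 0 < m) : ∫ x, chisqPDF m x = 1 := by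
  rw [integral_eq_lintegral_of_nonneg_ae (.of_forall (chisqPDF_nonneg m))
    (aestronglyMeasurable_chisqPDF m), lintegral_chisqPDF hm, ENNReal.toReal_one]

lemma intervalIntegral_chisqPDF_sub {m : ℕ} (hm : 0 < m) (x : ℝ) :
    (∫ u in (0 : ℝ)..x, chisqPDF m u) - ∫ u in (0 : ℝ)..x, chisqPDF (m + 2) u =
      2 * chisqPDF (m + 2) x := by
  have hint : IntervalIntegrable (chisqPDF m) volume 0 x :=
    (integrable_chisqPDF hm).intervalIntegrable
  have hint' : IntervalIntegrable (chisqPDF (m + 2)) volume 0 x :=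
    (integrable_chisqPDF (by lia)).intervalIntegrable
  have hFTC : ∫ u in (0 : ℝ)..x, (chisqPDF m u - chisqPDF (m + 2) u) / 2 =
      chisqPDF (m + 2) x - chisqPDF (m + 2) 0 :=
    integral_eq_of_hasDerivAt_off_countable _ _ (countable_singleton 0)
      (continuous_chisqPDF (by lia)).continuousOn
      (fun u hu ↦ hasDerivAt_chisqPDF_add_two hm hu.2) ((hint.sub hint').div_const 2)
  rw [intervalIntegral.integral_div, intervalIntegral.integral_sub hint hint',
    chisqPDF_of_nonpos _ le_rfl] at hFTC
  linarith

end CentralDensity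

section PoissonMixture

/-- The weight `e^{-λ/2} (λ/2)^j / j!` of `f_{m+2j}` in `g_{m,λ}`. For `λ ≥ 0` these are the Poisson
probabilities of mean `λ/2`; the formula is used for every real `λ`. -/
noncomputable def ncChisqWeight (lam : ℝ) (j : ℕ) : ℝ :=
  Real.exp (-lam / 2) * (lam / 2) ^ j / (Nat.factorial j : ℝ)

lemma ncChisqPDF_eq_tsum (m : ℕ) (lam x : ℝ) :
    ncChisqPDF m lam x = ∑' j : ℕ, ncChisqWeight lam j * chisqPDF (m + 2 * j) x :=
  rfl

lemma summable_ncChisqWeight (lam : ℝ) : Summable (ncChisqWeight lam) := by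
  unfold ncChisqWeight
  simpa only [mul_div_assoc] using
    (Real.summable_pow_div_factorial (lam / 2)).mul_left (Real.exp (-lam / 2))

lemma hasSum_setIntegral_ncChisqPDF {m : ℕ} (hm : 0 < m) (lam : ℝ) (s : Set ℝ) :
    HasSum (fun j ↦ ncChisqWeight lam j * ∫ u in s, chisqPDF (m + 2 * j) u)
      (∫ u in s, ncChisqPDF m lam u) := by
  have hint (j : ℕ) : Integrable (chisqPDF (m + 2 * j)) := integrable_chisqPDF (by lia)
  have hmass (j : ℕ) : ∫ u in s, chisqPDF (m + 2 * j) u ≤ 1 :=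
    (setIntegral_le_integral (hint j) (.of_forall (chisqPDF_nonneg _))).trans_eq
      (integral_chisqPDF (by lia))
  have hnorm (j : ℕ) : ∫ u in s, ‖ncChisqWeight lam j * chisqPDF (m + 2 * j) u‖ =
      |ncChisqWeight lam j| * ∫ u in s, chisqPDF (m + 2 * j) u := by
    simp only [norm_mul, Real.norm_eq_abs, abs_of_nonneg (chisqPDF_nonneg _ _),
      integral_const_mul]
  have hsummable : Summable fun j ↦ ∫ u in s, ‖ncChisqWeight lam j * chisqPDF (m + 2 * j) u‖ :=
    (summable_ncChisqWeight lam).abs.of_nonneg_of_le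
      (fun j ↦ integral_nonneg fun _ ↦ norm_nonneg _)
      (fun j ↦ (hnorm j).trans_le (mul_le_of_le_one_right (abs_nonneg _) (hmass j)))
  simpa only [integral_const_mul, ← ncChisqPDF_eq_tsum] using
    hasSum_integral_of_summable_integral_norm
      (fun j ↦ ((hint j).integrableOn (s := s)).const_mul (ncChisqWeight lam j)) hsummable

lemma hasSum_ncChisqCDF {m : ℕ} (hm : 0 < m) (lam x : ℝ) :
    HasSum (fun j ↦ ncChisqWeight lam j * ∫ u in (0 : ℝ)..x, chisqPDF (m + 2 * j) u)
      (ncChisqCDF m lam x) := by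
  simpa only [ncChisqCDF, intervalIntegral, mul_sub] using
    (hasSum_setIntegral_ncChisqPDF hm lam (Ioc 0 x)).sub
      (hasSum_setIntegral_ncChisqPDF hm lam (Ioc x 0))

lemma ncChisqCDF_sub {m : ℕ} (hm : 0 < m) (lam x : ℝ) :
    ncChisqCDF m lam x - ncChisqCDF (m + 2) lam x = 2 * ncChisqPDF (m + 2) lam x := by
  have hsum := (hasSum_ncChisqCDF hm lam x).sub (hasSum_ncChisqCDF (m := m + 2) (by lia) lam x)
  rw [← hsum.tsum_eq, ncChisqPDF_eq_tsum, ← tsum_mul_left]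
  refine tsum_congr fun j ↦ ?_
  rw [add_right_comm m 2, ← mul_sub, intervalIntegral_chisqPDF_sub (by lia), mul_left_comm]

end PoissonMixture

lemma localPower_eq_ncChisqPDF (b₁ b₂ b₃ lam x : ℝ) :
    localPower b₁ b₂ b₃ lam x = 1 - ncChisqCDF 1 lam x + 2 * ((b₁ + b₂ + b₃) * ncChisqPDF 3 lam x +
      (b₂ + b₃) * ncChisqPDF 5 lam x + b₃ * ncChisqPDF 7 lam x) := by
  have h₃ := ncChisqCDF_sub one_pos lam x
  have h₅ := ncChisqCDF_sub three_pos lam x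
  have h₇ := ncChisqCDF_sub (m := 5) (by norm_num) lam x
  rw [localPower]
  linear_combination (b₁ + b₂ + b₃) * h₃ + (b₂ + b₃) * h₅ + b₃ * h₇

theorem precision_local_power_differences_general (α₂ α₂' α₃ ε φ : ℝ) (hα₂ : α₂ ≠ 0)
    (hφ : φ ≠ 0) (p : ℕ) (x : ℝ) :
    (PiLR α₂ α₂' α₃ ε φ p x - PiWald α₂ α₂' α₃ ε φ p x =
      -(α₃ * ε / α₂) * ncChisqPDF 5 (-α₂ * ε ^ 2) x +
        α₃ * ε ^ 3 / 3 * ncChisqPDF 7 (-α₂ * ε ^ 2) x) ∧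
    (PiLR α₂ α₂' α₃ ε φ p x - PiScore α₂ α₂' α₃ ε φ p x =
      (2 * α₃ - 3 * α₂') * ε / α₂ * ncChisqPDF 5 (-α₂ * ε ^ 2) x -
        (2 * α₃ - 3 * α₂') * ε ^ 3 / 3 * ncChisqPDF 7 (-α₂ * ε ^ 2) x) ∧
    (PiLR α₂ α₂' α₃ ε φ p x - PiGrad α₂ α₂' α₃ ε φ p x =
      α₃ * ε / (2 * α₂) * ncChisqPDF 5 (-α₂ * ε ^ 2) x -
        α₃ * ε ^ 3 / 6 * ncChisqPDF 7 (-α₂ * ε ^ 2) x) ∧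
    (PiWald α₂ α₂' α₃ ε φ p x - PiScore α₂ α₂' α₃ ε φ p x =
      3 * (α₃ - α₂') * ε / α₂ * ncChisqPDF 5 (-α₂ * ε ^ 2) x -
        (α₃ - α₂') * ε ^ 3 * ncChisqPDF 7 (-α₂ * ε ^ 2) x) ∧
    (PiWald α₂ α₂' α₃ ε φ p x - PiGrad α₂ α₂' α₃ ε φ p x =
      3 * α₃ * ε / (2 * α₂) * ncChisqPDF 5 (-α₂ * ε ^ 2) x -
        α₃ * ε ^ 3 / 2 * ncChisqPDF 7 (-α₂ * ε ^ 2) x) ∧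
    (PiScore α₂ α₂' α₃ ε φ p x - PiGrad α₂ α₂' α₃ ε φ p x =
      -(3 * (α₃ - 2 * α₂') * ε / (2 * α₂)) * ncChisqPDF 5 (-α₂ * ε ^ 2) x +
        (α₃ - 2 * α₂') * ε ^ 3 / 2 * ncChisqPDF 7 (-α₂ * ε ^ 2) x) := by
  simp only [PiLR, PiWald, PiScore, PiGrad, localPower_eq_ncChisqPDF]
  refine ⟨?_, ?_, ?_, ?_, ?_, ?_⟩ <;> field_simp <;> ring

/-- **Local power differences for tests on the precision parameter.**
For every `x > 0`, the order-`n^{-1/2}` local powers of the likelihood ratio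
(`Π₁`), Wald (`Π₂`), score (`Π₃`) and gradient (`Π₄`) tests of `H₀ : φ = φ₀`
satisfy the six pairwise difference formulas in terms of the noncentral
chi-square densities `g_{5,λ}` and `g_{7,λ}` with `λ = -α₂ ε²`. -/
theorem precision_local_power_differences (α₂ α₂' α₃ ε φ : ℝ) (hα₂ : α₂ < 0)
    (hφ : 0 < φ) (p : ℕ) (hp : 1 ≤ p) (x : ℝ) (hx : 0 < x) :
    (PiLR α₂ α₂' α₃ ε φ p x - PiWald α₂ α₂' α₃ ε φ p x =
      -(α₃ * ε / α₂) * ncChisqPDF 5 (-α₂ * ε ^ 2) x +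
        α₃ * ε ^ 3 / 3 * ncChisqPDF 7 (-α₂ * ε ^ 2) x) ∧
    (PiLR α₂ α₂' α₃ ε φ p x - PiScore α₂ α₂' α₃ ε φ p x =
      (2 * α₃ - 3 * α₂') * ε / α₂ * ncChisqPDF 5 (-α₂ * ε ^ 2) x -
        (2 * α₃ - 3 * α₂') * ε ^ 3 / 3 * ncChisqPDF 7 (-α₂ * ε ^ 2) x) ∧
    (PiLR α₂ α₂' α₃ ε φ p x - PiGrad α₂ α₂' α₃ ε φ p x =
      α₃ * ε / (2 * α₂) * ncChisqPDF 5 (-α₂ * ε ^ 2) x -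
        α₃ * ε ^ 3 / 6 * ncChisqPDF 7 (-α₂ * ε ^ 2) x) ∧
    (PiWald α₂ α₂' α₃ ε φ p x - PiScore α₂ α₂' α₃ ε φ p x =
      3 * (α₃ - α₂') * ε / α₂ * ncChisqPDF 5 (-α₂ * ε ^ 2) x -
        (α₃ - α₂') * ε ^ 3 * ncChisqPDF 7 (-α₂ * ε ^ 2) x) ∧
    (PiWald α₂ α₂' α₃ ε φ p x - PiGrad α₂ α₂' α₃ ε φ p x =
      3 * α₃ * ε / (2 * α₂) * ncChisqPDF 5 (-α₂ * ε ^ 2) x -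
        α₃ * ε ^ 3 / 2 * ncChisqPDF 7 (-α₂ * ε ^ 2) x) ∧
    (PiScore α₂ α₂' α₃ ε φ p x - PiGrad α₂ α₂' α₃ ε φ p x =
      -(3 * (α₃ - 2 * α₂') * ε / (2 * α₂)) * ncChisqPDF 5 (-α₂ * ε ^ 2) x +
        (α₃ - 2 * α₂') * ε ^ 3 / 2 * ncChisqPDF 7 (-α₂ * ε ^ 2) x) :=
  precision_local_power_differences_general α₂ α₂' α₃ ε φ hα₂.ne hφ.ne' p x
end

section
/- In the precision-test setup, if α₂ < 0, α₃ > 0, α₂′ > α₃ and ε > 0, then for every x > 0 the local powers are strictly ordered as Π₃(x) < Π₂(x) < Π₁(x) < Π₄(x); if instead ε < 0, the reversed strict inequalities Π₃(x) > Π₂(x) > Π₁(x) > Π₄(x) hold. -/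
open MeasureTheory ProbabilityTheory Set
open scoped NNReal

section Gamma

variable {a r x : ℝ}

lemma integrable_gammaPDFReal (ha : 0 < a) (hr : 0 < r) : Integrable (gammaPDFReal a r) := by
  refine ⟨(measurable_gammaPDFReal a r).aestronglyMeasurable, ?_⟩
  rw [hasFiniteIntegral_iff_ofReal (ae_of_all _ (gammaPDFReal_nonneg ha hr))]
  exact (lintegral_gammaPDF_eq_one ha hr).trans_lt ENNReal.one_lt_top

lemma cdf_gammaMeasure_eq_intervalIntegral (ha : 0 < a) (hr : 0 < r) (x : ℝ) :
    cdf (gammaMeasure a r) x = ∫ u in 0..x, gammaPDFReal a r u := by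
  have hneg : ∫ u in Iic 0, gammaPDFReal a r u = 0 := by
    rw [integral_Iic_eq_integral_Iio]
    exact setIntegral_eq_zero_of_forall_eq_zero fun u hu => if_neg (not_le.2 hu)
  have hint := integrable_gammaPDFReal ha hr
  rw [cdf_gammaMeasure_eq_integral ha hr,
    ← intervalIntegral.integral_Iic_sub_Iic hint.integrableOn hint.integrableOn, hneg, sub_zero]

lemma hasDerivAt_gammaPDFReal_add_one (ha : 0 < a) (hr : r ≠ 0) (hx : 0 < x) :
    HasDerivAt (gammaPDFReal (a + 1) r)
      (r * (gammaPDFReal a r x - gammaPDFReal (a + 1) r x)) x := by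
  have hpow : HasDerivAt (fun u : ℝ => u ^ a) (a * x ^ (a - 1)) x :=
    Real.hasDerivAt_rpow_const (Or.inl hx.ne')
  have hexp : HasDerivAt (fun u : ℝ => Real.exp (-(r * u))) (Real.exp (-(r * x)) * -(r * 1)) x :=
    ((hasDerivAt_id x).const_mul r).neg.exp
  have hformula : gammaPDFReal (a + 1) r =ᶠ[nhds x]
      fun u => r ^ (a + 1) / Real.Gamma (a + 1) * (u ^ a * Real.exp (-(r * u))) := by
    filter_upwards [lt_mem_nhds hx] with u hu
    rw [gammaPDFReal, if_pos hu.le, add_sub_cancel_right, mul_assoc]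
  refine (((hpow.mul hexp).const_mul _).congr_of_eventuallyEq hformula).congr_deriv ?_
  have hGamma := (Real.Gamma_pos_of_pos ha).ne'
  simp only [gammaPDFReal, if_pos hx.le, add_sub_cancel_right, Real.Gamma_add_one ha.ne',
    Real.rpow_add_one hr]
  field_simp
  ring

lemma continuousOn_gammaPDFReal (ha : 1 ≤ a) : ContinuousOn (gammaPDFReal a r) (Ici 0) := by
  have hpow : Continuous fun u : ℝ => u ^ (a - 1) :=
    Real.continuous_rpow_const (sub_nonneg.2 ha)
  have hformula : Continuous fun u : ℝ =>
      r ^ a / Real.Gamma a * u ^ (a - 1) * Real.exp (-(r * u)) := by fun_prop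
  exact hformula.continuousOn.congr fun u hu => if_pos hu

lemma cdf_gammaMeasure_sub_cdf_gammaMeasure_add_one (ha : 0 < a) (hr : 0 < r) (hx : 0 ≤ x) :
    cdf (gammaMeasure a r) x - cdf (gammaMeasure (a + 1) r) x = gammaPDFReal (a + 1) r x / r := by
  have ha' : 0 < a + 1 := by positivity
  have hint := (integrable_gammaPDFReal ha hr).intervalIntegrable (a := 0) (b := x)
  have hint' := (integrable_gammaPDFReal ha' hr).intervalIntegrable (a := 0) (b := x)
  have hzero : gammaPDFReal (a + 1) r 0 = 0 := by
    simp [gammaPDFReal, Real.zero_rpow ha.ne']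
  have hftc := intervalIntegral.integral_eq_sub_of_hasDerivAt_of_le hx
    ((continuousOn_gammaPDFReal (r := r) (by linarith)).mono Icc_subset_Ici_self)
    (fun u hu => hasDerivAt_gammaPDFReal_add_one ha hr.ne' hu.1) ((hint.sub hint').const_mul r)
  rw [intervalIntegral.integral_const_mul, intervalIntegral.integral_sub hint hint', hzero,
    sub_zero] at hftc
  rw [cdf_gammaMeasure_eq_intervalIntegral ha hr x,
    cdf_gammaMeasure_eq_intervalIntegral ha' hr x, eq_div_iff hr.ne', mul_comm, hftc]

lemma cdf_gammaMeasure_add_one_lt (ha : 0 < a) (hr : 0 < r) (hx : 0 < x) :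
    cdf (gammaMeasure (a + 1) r) x < cdf (gammaMeasure a r) x := by
  rw [← sub_pos, cdf_gammaMeasure_sub_cdf_gammaMeasure_add_one ha hr hx.le]
  exact div_pos (gammaPDFReal_pos (by positivity) hr hx) hr

end Gamma

lemma hasSum_mul_integral_of_integral_le {ι α : Type*} [Countable ι] [MeasurableSpace α]
    {μ : Measure α} {w : ι → ℝ} {f : ι → α → ℝ} {C : ℝ} (hw : ∀ i, 0 ≤ w i)
    (hw_sum : Summable w) (hf : ∀ i a, 0 ≤ f i a) (hf_int : ∀ i, Integrable (f i) μ)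
    (hf_le : ∀ i, ∫ a, f i a ∂μ ≤ C) :
    HasSum (fun i => w i * ∫ a, f i a ∂μ) (∫ a, ∑' i, w i * f i a ∂μ) := by
  have hnorm (i : ι) : ∫ a, ‖w i * f i a‖ ∂μ = w i * ∫ a, f i a ∂μ := by
    simp only [Real.norm_of_nonneg (mul_nonneg (hw i) (hf i _)), integral_const_mul]
  have hsum : Summable fun i => ∫ a, ‖w i * f i a‖ ∂μ := by
    simp only [hnorm]
    exact (hw_sum.mul_right C).of_nonneg_of_le
      (fun i => mul_nonneg (hw i) (integral_nonneg (hf i)))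
      (fun i => mul_le_mul_of_nonneg_left (hf_le i) (hw i))
  simpa only [integral_const_mul] using
    hasSum_integral_of_summable_integral_norm (fun i => (hf_int i).const_mul (w i)) hsum

section Chisq

variable {m : ℕ} {x : ℝ}

lemma chisqPDF_eq_gammaPDFReal (m : ℕ) (hx : 0 < x) :
    chisqPDF m x = gammaPDFReal (m / 2) (1 / 2) x := by
  rw [chisqPDF, gammaPDFReal, if_pos hx, if_pos hx.le, Real.div_rpow zero_le_one zero_le_two,
    Real.one_rpow, neg_div, div_eq_inv_mul x, one_div 2]
  field_simp

lemma ncChisqPDF_eq_tsum_poissonMeasure (m : ℕ) (lam : ℝ≥0) (hx : 0 < x) :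
    ncChisqPDF m lam x =
      ∑' j : ℕ, (poissonMeasure (lam / 2)).real {j} * gammaPDFReal (m / 2 + j) (1 / 2) x := by
  refine tsum_congr fun j => ?_
  have hshape : ((m + 2 * j : ℕ) : ℝ) / 2 = m / 2 + j := by push_cast; ring
  rw [chisqPDF_eq_gammaPDFReal _ hx, hshape, poissonMeasure_real_singleton, NNReal.coe_div,
    NNReal.coe_two, neg_div]

lemma hasSum_ncChisqCDF_s7 (hm : 0 < m) (lam : ℝ≥0) (hx : 0 ≤ x) :
    HasSum (fun j : ℕ => (poissonMeasure (lam / 2)).real {j} *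
      cdf (gammaMeasure (m / 2 + j) (1 / 2)) x) (ncChisqCDF m lam x) := by
  have ha (j : ℕ) : (0 : ℝ) < m / 2 + j := by positivity
  have hr : (0 : ℝ) < 1 / 2 := by norm_num
  have hcdf (j : ℕ) : cdf (gammaMeasure (m / 2 + j) (1 / 2)) x =
      ∫ u in Ioc 0 x, gammaPDFReal (m / 2 + j) (1 / 2) u := by
    rw [cdf_gammaMeasure_eq_intervalIntegral (ha j) hr x, intervalIntegral.integral_of_le hx]
  have hweight : Summable fun j : ℕ => (poissonMeasure (lam / 2)).real {j} := by
    simpa only [poissonMeasure_real_singleton] using (hasSum_one_poissonMeasure (lam / 2)).summable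
  rw [ncChisqCDF, intervalIntegral.integral_of_le hx, setIntegral_congr_fun measurableSet_Ioc
    fun u hu => ncChisqPDF_eq_tsum_poissonMeasure m lam hu.1]
  simp only [hcdf]
  exact hasSum_mul_integral_of_integral_le (fun _ => measureReal_nonneg) hweight
    (fun j => gammaPDFReal_nonneg (ha j) hr)
    (fun j => (integrable_gammaPDFReal (ha j) hr).integrableOn)
    (fun j => (hcdf j).symm.trans_le (cdf_le_one _ x))

lemma ncChisqCDF_add_two_lt (hm : 0 < m) {lam : ℝ} (hlam : 0 ≤ lam) (hx : 0 < x) :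
    ncChisqCDF (m + 2) lam x < ncChisqCDF m lam x := by
  lift lam to ℝ≥0 using hlam
  have hcdf (j : ℕ) : cdf (gammaMeasure ((m + 2 : ℕ) / 2 + j) (1 / 2)) x <
      cdf (gammaMeasure (m / 2 + j) (1 / 2)) x := by
    have hshape : ((m + 2 : ℕ) : ℝ) / 2 + j = m / 2 + j + 1 := by push_cast; ring
    rw [hshape]
    exact cdf_gammaMeasure_add_one_lt (by positivity) (by norm_num) hx
  have hweight : 0 < (poissonMeasure (lam / 2)).real {0} := by
    rw [poissonMeasure_real_singleton]
    positivity
  exact hasSum_lt (fun j => mul_le_mul_of_nonneg_left (hcdf j).le measureReal_nonneg)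
    (mul_lt_mul_of_pos_left (hcdf 0) hweight) (hasSum_ncChisqCDF_s7 (by positivity) lam hx.le)
    (hasSum_ncChisqCDF_s7 hm lam hx.le)

end Chisq

section LocalPower

lemma localPower_eq_sum_by_parts (b1 b2 b3 lam x : ℝ) :
    localPower b1 b2 b3 lam x = 1 - ncChisqCDF 1 lam x +
      (b1 + b2 + b3) * (ncChisqCDF 1 lam x - ncChisqCDF 3 lam x) +
      (b2 + b3) * (ncChisqCDF 3 lam x - ncChisqCDF 5 lam x) +
      b3 * (ncChisqCDF 5 lam x - ncChisqCDF 7 lam x) := by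
  rw [localPower]
  ring

lemma sign_localPower_sub_localPower {b1 b2 b3 c1 c2 c3 lam x ε s t : ℝ} (hlam : 0 ≤ lam)
    (hx : 0 < x) (hs : 0 < s) (ht : 0 ≤ t) (hsum123 : c1 + c2 + c3 = b1 + b2 + b3)
    (hsum23 : c2 + c3 = b2 + b3 + ε * s) (hcoeff3 : c3 = b3 + ε * t) :
    SignType.sign (localPower c1 c2 c3 lam x - localPower b1 b2 b3 lam x) = SignType.sign ε := by
  have hG35 : 0 < ncChisqCDF 3 lam x - ncChisqCDF 5 lam x :=
    sub_pos.2 (ncChisqCDF_add_two_lt three_pos hlam hx)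
  have hG57 : 0 < ncChisqCDF 5 lam x - ncChisqCDF 7 lam x :=
    sub_pos.2 (ncChisqCDF_add_two_lt (by norm_num) hlam hx)
  have hgap : localPower c1 c2 c3 lam x - localPower b1 b2 b3 lam x =
      ε * (s * (ncChisqCDF 3 lam x - ncChisqCDF 5 lam x) +
        t * (ncChisqCDF 5 lam x - ncChisqCDF 7 lam x)) := by
    rw [localPower_eq_sum_by_parts, localPower_eq_sum_by_parts, hsum123, hsum23, hcoeff3]
    ring
  have hfactor : 0 < s * (ncChisqCDF 3 lam x - ncChisqCDF 5 lam x) +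
      t * (ncChisqCDF 5 lam x - ncChisqCDF 7 lam x) :=
    add_pos_of_pos_of_nonneg (mul_pos hs hG35) (mul_nonneg ht hG57.le)
  rw [hgap, sign_mul, sign_pos hfactor, mul_one]

variable {α₂ α₂' α₃ x : ℝ}

lemma sign_PiWald_sub_PiScore (hα₂ : α₂ < 0) (hα₂' : α₃ < α₂') (ε φ : ℝ) (p : ℕ) (hx : 0 < x) :
    SignType.sign (PiWald α₂ α₂' α₃ ε φ p x - PiScore α₂ α₂' α₃ ε φ p x) = SignType.sign ε := by
  have hneg : 0 < -α₂ := neg_pos.2 hα₂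
  have hα : 0 < α₂' - α₃ := sub_pos.2 hα₂'
  refine sign_localPower_sub_localPower (s := 3 * (α₂' - α₃) / (2 * -α₂))
    (t := (α₂' - α₃) * ε ^ 2 / 2) (by positivity) hx
    (div_pos (mul_pos three_pos hα) (by positivity)) (by positivity) ?_ ?_ ?_ <;>
  · field_simp [hα₂.ne]
    ring

lemma sign_PiLR_sub_PiWald (hα₂ : α₂ < 0) (hα₃ : 0 < α₃) (α₂' ε φ : ℝ) (p : ℕ) (hx : 0 < x) :
    SignType.sign (PiLR α₂ α₂' α₃ ε φ p x - PiWald α₂ α₂' α₃ ε φ p x) = SignType.sign ε := by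
  have hneg : 0 < -α₂ := neg_pos.2 hα₂
  refine sign_localPower_sub_localPower (s := α₃ / (2 * -α₂))
    (t := α₃ * ε ^ 2 / 6) (by positivity) hx (by positivity) (by positivity) ?_ ?_ ?_ <;>
  · field_simp [hα₂.ne]
    ring

lemma sign_PiGrad_sub_PiLR (hα₂ : α₂ < 0) (hα₃ : 0 < α₃) (α₂' ε φ : ℝ) (p : ℕ) (hx : 0 < x) :
    SignType.sign (PiGrad α₂ α₂' α₃ ε φ p x - PiLR α₂ α₂' α₃ ε φ p x) = SignType.sign ε := by
  have hneg : 0 < -α₂ := neg_pos.2 hα₂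
  refine sign_localPower_sub_localPower (s := α₃ / (4 * -α₂))
    (t := α₃ * ε ^ 2 / 12) (by positivity) hx (by positivity) (by positivity) ?_ ?_ ?_ <;>
  · field_simp [hα₂.ne]
    ring

end LocalPower

/-- **Ordering of local powers for the precision-parameter tests.**
If `α₂ < 0`, `α₃ > 0` and `α₂′ > α₃`, then for every `x > 0` the local powers
satisfy `Π₃ < Π₂ < Π₁ < Π₄` when `ε > 0`, and the reversed strict inequalities
`Π₃ > Π₂ > Π₁ > Π₄` when `ε < 0`. -/
theorem precision_local_power_ordering (α₂ α₂' α₃ ε φ : ℝ) (hα₂ : α₂ < 0)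
    (hα₃ : 0 < α₃) (hα₂' : α₃ < α₂') (hφ : 0 < φ) (p : ℕ) (hp : 1 ≤ p)
    (x : ℝ) (hx : 0 < x) :
    (0 < ε →
      PiScore α₂ α₂' α₃ ε φ p x < PiWald α₂ α₂' α₃ ε φ p x ∧
      PiWald α₂ α₂' α₃ ε φ p x < PiLR α₂ α₂' α₃ ε φ p x ∧
      PiLR α₂ α₂' α₃ ε φ p x < PiGrad α₂ α₂' α₃ ε φ p x) ∧
    (ε < 0 →
      PiGrad α₂ α₂' α₃ ε φ p x < PiLR α₂ α₂' α₃ ε φ p x ∧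
      PiLR α₂ α₂' α₃ ε φ p x < PiWald α₂ α₂' α₃ ε φ p x ∧
      PiWald α₂ α₂' α₃ ε φ p x < PiScore α₂ α₂' α₃ ε φ p x) := by
  have hWS := sign_PiWald_sub_PiScore hα₂ hα₂' ε φ p hx
  have hLW := sign_PiLR_sub_PiWald hα₂ hα₃ α₂' ε φ p hx
  have hGL := sign_PiGrad_sub_PiLR hα₂ hα₃ α₂' ε φ p hx
  constructor <;> intro hε
  · rw [sign_pos hε, sign_eq_one_iff, sub_pos] at hWS hLW hGL
    exact ⟨hWS, hLW, hGL⟩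
  · rw [sign_neg hε, sign_eq_neg_one_iff, sub_neg] at hWS hLW hGL
    exact ⟨hGL, hLW, hWS⟩
end
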